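/- arXiv:1806.01234 — 5 statements merged into one kernel-verified Lean document; each statement's English description precedes it below -/
import Mathlib

section
/- Let Γ ⊆ [0,1] be a set of real numbers. Then 𝕊(𝕊(Γ)) = 𝕊(Γ); that is, the operation Γ ↦ 𝕊(Γ) is idempotent on subsets of [0,1]. -/
/-- The set 𝕊(Γ) of the paper: `{1}` together with all real numbers
`s ≤ 1` of the form `1 - 1/m + (1/m) * ∑ r_j * γ_j` with `m` a positive
integer, `r_j` nonnegative integers and `γ_j ∈ Γ`. -/
def Sset (Γ : Set ℝ) : Set ℝ :=
  {1} ∪ {s : ℝ | s ≤ 1 ∧ ∃ (m : ℕ), 0 < m ∧ ∃ (k : ℕ) (r : Fin k → ℕ) (γ : Fin k → ℝ),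
    (∀ j, γ j ∈ Γ) ∧ s = 1 - 1 / (m : ℝ) + (1 / (m : ℝ)) * ∑ j, (r j : ℝ) * γ j}

theorem AddSubmonoid.mem_closure_iff_exists_fin_sum {Γ : Set ℝ} {x : ℝ} :
    x ∈ AddSubmonoid.closure Γ ↔ ∃ (k : ℕ) (r : Fin k → ℕ) (γ : Fin k → ℝ),
      (∀ j, γ j ∈ Γ) ∧ x = ∑ j, (r j : ℝ) * γ j := by
  constructor
  · intro hx
    induction hx using AddSubmonoid.closure_induction with
    | mem x hx => exact ⟨1, fun _ => 1, fun _ => x, fun _ => hx, by simp⟩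
    | zero => exact ⟨0, Fin.elim0, Fin.elim0, fun j => j.elim0, by simp⟩
    | add x y _ _ ihx ihy =>
      obtain ⟨k, r, γ, hγ, rfl⟩ := ihx
      obtain ⟨l, q, δ, hδ, rfl⟩ := ihy
      refine ⟨k + l, Fin.append r q, Fin.append γ δ, fun j => ?_, ?_⟩
      · refine Fin.addCases (fun i => ?_) (fun i => ?_) j
        · simpa using hγ i
        · simpa using hδ i
      · simp [Fin.sum_univ_add]
  · rintro ⟨k, r, γ, hγ, rfl⟩
    refine AddSubmonoid.sum_mem _ fun j _ => ?_
    rw [← nsmul_eq_mul]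
    exact AddSubmonoid.nsmul_mem _ (AddSubmonoid.subset_closure (hγ j)) _

theorem mem_Sset_iff {Γ : Set ℝ} {s : ℝ} :
    s ∈ Sset Γ ↔ s = 1 ∨ s ≤ 1 ∧ ∃ m : ℕ, 0 < m ∧ ∃ σ ∈ AddSubmonoid.closure Γ,
      s = 1 - 1 / (m : ℝ) + 1 / (m : ℝ) * σ := by
  simp only [Sset, Set.mem_union, Set.mem_singleton_iff, Set.mem_ofPred_eq,
    AddSubmonoid.mem_closure_iff_exists_fin_sum]
  refine or_congr_right (and_congr_right fun _ => exists_congr fun m => and_congr_right fun _ => ?_)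
  constructor
  · rintro ⟨k, r, γ, hγ, h⟩
    exact ⟨_, ⟨k, r, γ, hγ, rfl⟩, h⟩
  · rintro ⟨_, ⟨k, r, γ, hγ, rfl⟩, h⟩
    exact ⟨k, r, γ, hγ, h⟩

theorem closure_nonneg {Γ : Set ℝ} (hΓ : ∀ γ ∈ Γ, 0 ≤ γ) {σ : ℝ}
    (hσ : σ ∈ AddSubmonoid.closure Γ) : 0 ≤ σ :=
  (AddSubmonoid.closure_le (S := AddSubmonoid.nonneg ℝ)).2 hΓ hσ

theorem one_sub_one_div_le {m : ℕ} {σ : ℝ} (hσ : 0 ≤ σ) :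
    1 - 1 / (m : ℝ) ≤ 1 - 1 / (m : ℝ) + 1 / (m : ℝ) * σ :=
  le_add_of_nonneg_right (by positivity)

theorem Sset_nonneg {Γ : Set ℝ} (hΓ : ∀ γ ∈ Γ, 0 ≤ γ) {s : ℝ} (hs : s ∈ Sset Γ) : 0 ≤ s := by
  obtain rfl | ⟨-, m, hm, σ, hσ, rfl⟩ := mem_Sset_iff.1 hs
  · exact zero_le_one
  · refine le_trans (sub_nonneg.2 ?_) (one_sub_one_div_le (closure_nonneg hΓ hσ))
    rw [div_le_one (by positivity)]
    exact_mod_cast hm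

theorem closure_add_mem_Sset {Γ : Set ℝ} {σ τ : ℝ} {n : ℕ} (hn : 0 < n)
    (hσ : σ ∈ AddSubmonoid.closure Γ) (hτ : τ ∈ AddSubmonoid.closure Γ)
    (h : σ + (1 - 1 / (n : ℝ) + 1 / (n : ℝ) * τ) ≤ 1) :
    σ + (1 - 1 / (n : ℝ) + 1 / (n : ℝ) * τ) ∈ Sset Γ := by
  refine mem_Sset_iff.2 (Or.inr ⟨h, n, hn, n • σ + τ,
    add_mem (AddSubmonoid.nsmul_mem _ hσ n) hτ, ?_⟩)
  rw [nsmul_eq_mul]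
  field_simp
  ring

theorem add_mem_Sset {Γ : Set ℝ} (hΓ : ∀ γ ∈ Γ, 0 ≤ γ) {a b : ℝ} (ha : a ∈ Sset Γ)
    (hb : b ∈ Sset Γ) (hab : a + b ≤ 1) : a + b ∈ Sset Γ := by
  obtain h1 | hlt := hab.eq_or_lt
  · exact mem_Sset_iff.2 (Or.inl h1)
  have ha0 := Sset_nonneg hΓ ha
  have hb0 := Sset_nonneg hΓ hb
  obtain rfl | ⟨-, m, hm, σ, hσ, rfl⟩ := mem_Sset_iff.1 ha
  · linarith
  obtain rfl | ⟨-, n, hn, τ, hτ, rfl⟩ := mem_Sset_iff.1 hb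
  · linarith
  obtain rfl | hm2 : m = 1 ∨ 2 ≤ m := by omega
  · have := closure_add_mem_Sset hn hσ hτ (by simpa using hab)
    simpa using this
  obtain rfl | hn2 : n = 1 ∨ 2 ≤ n := by omega
  · rw [add_comm] at hab ⊢
    have := closure_add_mem_Sset hm hτ hσ (by simpa using hab)
    simpa using this
  have half {p : ℕ} (hp : 2 ≤ p) : 1 / (p : ℝ) ≤ 1 / 2 :=
    one_div_le_one_div_of_le two_pos (by exact_mod_cast hp)
  linarith [half hm2, half hn2, one_sub_one_div_le (m := m) (closure_nonneg hΓ hσ),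
    one_sub_one_div_le (m := n) (closure_nonneg hΓ hτ)]

theorem closure_Sset_mem {Γ : Set ℝ} (hΓ : ∀ γ ∈ Γ, 0 ≤ γ) {s : ℝ}
    (hs : s ∈ AddSubmonoid.closure (Sset Γ)) (h1 : s ≤ 1) : s ∈ Sset Γ := by
  induction hs using AddSubmonoid.closure_induction with
  | mem x hx => exact hx
  | zero => exact mem_Sset_iff.2 (Or.inr ⟨h1, 1, one_pos, 0, zero_mem _, by simp⟩)
  | add x y hx hy ihx ihy =>
    have hx0 := closure_nonneg (fun _ => Sset_nonneg hΓ) hx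
    have hy0 := closure_nonneg (fun _ => Sset_nonneg hΓ) hy
    exact add_mem_Sset hΓ (ihx (by linarith)) (ihy (by linarith)) h1

theorem subset_Sset {Γ : Set ℝ} (hΓ : ∀ γ ∈ Γ, γ ≤ 1) : Γ ⊆ Sset Γ := fun γ hγ =>
  mem_Sset_iff.2 (Or.inr ⟨hΓ γ hγ, 1, one_pos, γ, AddSubmonoid.subset_closure hγ, by simp⟩)

/-- For `Γ ⊆ [0,1]`, the operation `Γ ↦ 𝕊(Γ)` is idempotent: `𝕊(𝕊(Γ)) = 𝕊(Γ)`. -/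
theorem Sset_idempotent (Γ : Set ℝ) (hΓ : Γ ⊆ Set.Icc (0 : ℝ) 1) :
    Sset (Sset Γ) = Sset Γ := by
  have hΓ0 : ∀ γ ∈ Γ, 0 ≤ γ := fun γ hγ => (hΓ hγ).1
  refine Set.Subset.antisymm (fun s hs => ?_) (subset_Sset fun s hs => ?_)
  · obtain rfl | ⟨hs1, m, hm, x, hx, rfl⟩ := mem_Sset_iff.1 hs
    · exact mem_Sset_iff.2 (Or.inl rfl)
    have hm0 : (0 : ℝ) < 1 / m := by positivity
    have hx1 : x ≤ 1 := by
      by_contra! h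
      nlinarith
    obtain rfl | ⟨-, n, hn, σ, hσ, rfl⟩ := mem_Sset_iff.1 (closure_Sset_mem hΓ0 hx hx1)
    · exact mem_Sset_iff.2 (Or.inl (by ring))
    refine mem_Sset_iff.2 (Or.inr ⟨hs1, m * n, Nat.mul_pos hm hn, σ, hσ, ?_⟩)
    push_cast
    field_simp
    ring
  · obtain rfl | ⟨h, -⟩ := mem_Sset_iff.1 hs
    · exact le_rfl
    · exact h
end

section
/- With X and Y as defined in the context, every nonempty subset of W = {1 + y/(−x) : x ∈ X, y ∈ Y} has a least element; in particular, W contains no infinite strictly decreasing sequence, i.e., W satisfies the descending chain condition (DCC). -/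
open Set in
/-- A linear form with nonnegative coefficients maps a product of well-ordered sets to a
partially well-ordered set. -/
theorem isPWO_image_linearForm {ι : Type*} [Fintype ι] {c : ℝ} (hc : 0 ≤ c) {a : ι → ℝ}
    (ha : ∀ i, 0 ≤ a i) {s : ι → Set ℝ} (hs : ∀ i, (s i).IsPWO) :
    ((fun v : ι → ℝ => c * ∑ i, a i * v i) '' univ.pi s).IsPWO :=
  (IsPWO.pi hs).image_of_monotone fun _ _ h =>
    mul_le_mul_of_nonneg_left
      (Finset.sum_le_sum fun i _ => mul_le_mul_of_nonneg_left (h i) (ha i)) hc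

theorem isPWO_intCast_Ici (r : ℝ) : ((fun n : ℤ => (n : ℝ)) '' {n | r ≤ n}).IsPWO := by
  refine Set.IsPWO.image_of_monotone ?_ Int.cast_mono
  refine Set.isPWO_iff_isWF.mpr (BddBelow.isWF ⟨⌊r⌋, fun n hn => ?_⟩)
  exact_mod_cast (Int.floor_le r).trans hn

theorem isPWO_range_natCast : (Set.range fun n : ℕ => (n : ℝ)).IsPWO := by
  rw [← Set.image_univ]
  exact (Set.isPWO_of_wellQuasiOrderedLE _).image_of_monotone Nat.mono_cast

/-- On negative `x` and nonnegative `y`, the expression `1 + y / (-x)` is monotone in both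
variables, so it preserves partial well-ordering. -/
theorem isPWO_one_add_div_neg {X Y : Set ℝ} (hX : X.IsPWO) (hY : Y.IsPWO)
    (hX_neg : ∀ x ∈ X, x < 0) (hY_nonneg : ∀ y ∈ Y, 0 ≤ y) :
    {w : ℝ | ∃ x ∈ X, ∃ y ∈ Y, w = 1 + y / (-x)}.IsPWO := by
  have hmono : MonotoneOn (fun p : ℝ × ℝ => 1 + p.2 / (-p.1)) (X ×ˢ Y) := by
    rintro ⟨x, y⟩ - ⟨x', y'⟩ ⟨hx', hy'⟩ ⟨hxx, hyy⟩
    have hneg := hX_neg x' hx'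
    exact add_le_add_right
      (div_le_div₀ (hY_nonneg y' hy') hyy (neg_pos.mpr hneg) (neg_le_neg hxx)) 1
  refine ((hX.prod hY).image_of_monotoneOn hmono).mono ?_
  rintro w ⟨x, hx, y, hy, rfl⟩
  exact ⟨(x, y), ⟨hx, hy⟩, rfl⟩

/-- Numerical core of Lemma 3.10: with
`X = {(1/m) ∑ a_j n_j : n_j ∈ ℤ, n_j ≥ -2md} ∩ [-2d, 0)` and
`Y = {(1/m) ∑ b_k n_k : n_k ∈ ℕ}`, every nonempty subset of
`W = {1 + y/(-x) : x ∈ X, y ∈ Y}` has a least element; in particular `W` contains no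
infinite strictly decreasing sequence (DCC). -/
theorem reciprocal_nef_thresholds_wellOrdered_and_DCC (d m : ℕ) (hd : 0 < d) (hm : 0 < m)
    (s t : ℕ) (a : Fin s → ℝ) (ha : ∀ j, 0 < a j) (b : Fin t → ℝ) (hb : ∀ k, 0 < b k) :
    let X : Set ℝ := {x | ∃ n : Fin s → ℤ, (∀ j, -(2 * (m : ℝ) * (d : ℝ)) ≤ (n j : ℝ)) ∧
        x = (1 / (m : ℝ)) * ∑ j, a j * (n j : ℝ)} ∩ Set.Ico (-(2 * (d : ℝ))) 0
    let Y : Set ℝ := {y | ∃ n : Fin t → ℕ, y = (1 / (m : ℝ)) * ∑ k, b k * (n k : ℝ)}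
    let W : Set ℝ := {w | ∃ x ∈ X, ∃ y ∈ Y, w = 1 + y / (-x)}
    (∀ S : Set ℝ, S ⊆ W → S.Nonempty → ∃ x ∈ S, ∀ y ∈ S, x ≤ y) ∧
    (∀ f : ℕ → ℝ, (∀ i, f i ∈ W) → ¬ StrictAnti f) := by
  intro X Y W
  have hc : (0 : ℝ) ≤ 1 / (m : ℝ) := by positivity
  have hX : X.IsPWO := by
    refine (isPWO_image_linearForm hc (fun j => (ha j).le)
      fun _ => isPWO_intCast_Ici (-(2 * (m : ℝ) * (d : ℝ)))).mono ?_
    rintro x ⟨⟨n, hn, rfl⟩, -⟩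
    exact ⟨fun j => (n j : ℝ), fun j _ => ⟨n j, hn j, rfl⟩, rfl⟩
  have hY : Y.IsPWO := by
    refine (isPWO_image_linearForm hc (fun k => (hb k).le) fun _ => isPWO_range_natCast).mono ?_
    rintro y ⟨n, rfl⟩
    exact ⟨fun k => (n k : ℝ), fun k _ => ⟨n k, rfl⟩, rfl⟩
  have hY_nonneg : ∀ y ∈ Y, 0 ≤ y := by
    rintro y ⟨n, rfl⟩
    exact mul_nonneg hc (Finset.sum_nonneg fun k _ => mul_nonneg (hb k).le (Nat.cast_nonneg _))
  have hW : W.IsPWO := isPWO_one_add_div_neg hX hY (fun _ hx => hx.2.2) hY_nonneg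
  have hmin : ∀ S : Set ℝ, S ⊆ W → S.Nonempty → ∃ x ∈ S, ∀ y ∈ S, x ≤ y := by
    intro S hS hne
    obtain ⟨x, hx⟩ := (hW.mono hS).exists_minimal hne
    exact ⟨x, hx.prop, fun y hy => (le_total x y).elim id (hx.le_of_le hy)⟩
  refine ⟨hmin, fun f hf hanti => ?_⟩
  obtain ⟨_, ⟨i, rfl⟩, hi⟩ := hmin (Set.range f) (Set.range_subset_iff.mpr hf) (Set.range_nonempty f)
  exact (hanti i.lt_succ_self).not_ge (hi _ ⟨i + 1, rfl⟩)
end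

section
/- Under the hypotheses in the context, the set N_T = {x ∈ P : φ_t(x) ≥ 0 for every t ∈ T} is a rational polytope, i.e., there exists a finite set of points of ℚ^d whose convex hull in ℝ^d equals N_T. -/
open Finset in
/-- A convex combination of points on both sides of a hyperplane `ψ = 0`, with nonnegative total
value of `ψ`, is a convex combination of the points with `0 ≤ ψ` and of the intersections of the
hyperplane with the segments joining the two sides. -/
lemma Convex.sum_add_sum_mem_of_crossing_mem {E : Type*} [AddCommGroup E] [Module ℝ E] {C : Set E}
    (hC : Convex ℝ C) {A B : Finset E} {w ψ : E → ℝ}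
    (hwA : ∀ a ∈ A, 0 ≤ w a) (hwB : ∀ b ∈ B, 0 ≤ w b)
    (hw : ∑ a ∈ A, w a + ∑ b ∈ B, w b = 1)
    (hA : ∀ a ∈ A, 0 ≤ ψ a) (hB : ∀ b ∈ B, ψ b < 0)
    (hψ : 0 ≤ ∑ a ∈ A, w a * ψ a + ∑ b ∈ B, w b * ψ b)
    (hAC : ∀ a ∈ A, a ∈ C)
    (hABC : ∀ a ∈ A, ∀ b ∈ B, AffineMap.lineMap a b (ψ a / (ψ a - ψ b)) ∈ C) :
    ∑ a ∈ A, w a • a + ∑ b ∈ B, w b • b ∈ C := by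
  set S := ∑ a ∈ A, w a * ψ a with hS
  set D := ∑ b ∈ B, w b * -ψ b with hD
  have hnonneg : ∀ b ∈ B, 0 ≤ w b * -ψ b := fun b hb =>
    mul_nonneg (hwB b hb) (neg_nonneg.2 (hB b hb).le)
  have hD0 : 0 ≤ D := sum_nonneg hnonneg
  have hDS : D ≤ S := by
    have : D = -∑ b ∈ B, w b * ψ b := by simp [hD]
    linarith
  rcases hD0.eq_or_lt with hD0 | hD0
  · have hzero : ∀ b ∈ B, w b = 0 := fun b hb =>
      (mul_eq_zero.1 ((sum_eq_zero_iff_of_nonneg hnonneg).1 hD0.symm b hb)).resolve_right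
        (neg_ne_zero.2 (hB b hb).ne)
    rw [sum_eq_zero hzero, add_zero] at hw
    rw [sum_eq_zero (s := B) fun b hb => by rw [hzero b hb, zero_smul], add_zero]
    exact hC.sum_mem hwA hw hAC
  have hSpos : 0 < S := hD0.trans_le hDS
  let u : E ⊕ E × E → ℝ := Sum.elim (fun a => w a * (1 - D / S))
    fun c => w c.1 * w c.2 * (ψ c.1 - ψ c.2) / S
  let z : E ⊕ E × E → E := Sum.elim id
    fun c => AffineMap.lineMap c.1 c.2 (ψ c.1 / (ψ c.1 - ψ c.2))
  have hu : ∀ i ∈ A.disjSum (A ×ˢ B), 0 ≤ u i := by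
    rintro (a | ⟨a, b⟩) hi
    · have ha : a ∈ A := by simpa using hi
      exact mul_nonneg (hwA a ha) (sub_nonneg.2 ((div_le_one hSpos).2 hDS))
    · obtain ⟨ha, hb⟩ : a ∈ A ∧ b ∈ B := by simpa using hi
      exact div_nonneg (mul_nonneg (mul_nonneg (hwA a ha) (hwB b hb))
        (by linarith [hA a ha, hB b hb])) hSpos.le
  have hz : ∀ i ∈ A.disjSum (A ×ˢ B), z i ∈ C := by
    rintro (a | ⟨a, b⟩) hi
    · exact hAC a (by simpa using hi)
    · obtain ⟨ha, hb⟩ : a ∈ A ∧ b ∈ B := by simpa using hi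
      exact hABC a ha b hb
  have hu1 : ∑ i ∈ A.disjSum (A ×ˢ B), u i = 1 := by
    have hpair : ∑ a ∈ A, ∑ b ∈ B, w a * w b * (ψ a - ψ b) / S =
        (∑ a ∈ A, w a) * D / S + S * (∑ b ∈ B, w b) / S := by
      rw [hS, hD, sum_mul_sum, sum_mul_sum, ← hS, sum_div, sum_div, ← sum_add_distrib]
      refine sum_congr rfl fun a _ => ?_
      rw [sum_div, sum_div, ← sum_add_distrib]
      exact sum_congr rfl fun b _ => by ring
    rw [sum_disjSum, sum_product]
    simp only [u, Sum.elim_inl, Sum.elim_inr]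
    rw [hpair, ← sum_mul, mul_div_cancel_left₀ _ hSpos.ne']
    linear_combination hw
  have huz : ∑ i ∈ A.disjSum (A ×ˢ B), u i • z i = ∑ a ∈ A, w a • a + ∑ b ∈ B, w b • b := by
    have hcross : ∀ a ∈ A, ∀ b ∈ B, (w a * w b * (ψ a - ψ b) / S) •
        (AffineMap.lineMap a b (ψ a / (ψ a - ψ b)) : E) =
          ((w b * -ψ b) * S⁻¹) • w a • a + (w a * ψ a * S⁻¹) • w b • b := by
      intro a ha b hb
      have hab : ψ a - ψ b ≠ 0 := by linarith [hA a ha, hB b hb]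
      rw [AffineMap.lineMap_apply_module]
      match_scalars
      · field_simp
        ring
      · field_simp
    rw [sum_disjSum, sum_product]
    simp only [u, z, Sum.elim_inl, Sum.elim_inr, id]
    rw [sum_congr rfl fun a ha => sum_congr rfl (hcross a ha)]
    simp only [sum_add_distrib, ← sum_smul, ← smul_sum, ← sum_mul]
    rw [← hS, ← hD, mul_inv_cancel₀ hSpos.ne', one_smul, ← add_assoc, smul_sum, ← sum_add_distrib]
    congr 1
    refine sum_congr rfl fun a _ => ?_
    match_scalars
    field_simp
    ring
  exact huz ▸ hC.sum_mem hu hu1 hz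

/-- Points at which every function of the family `F` takes a rational value. -/
def rationalPoints {E ι : Type*} [AddCommGroup E] [Module ℝ E] (F : ι → E →ᵃ[ℝ] ℝ) : Set E :=
  {x | ∀ i, F i x ∈ Set.range ((↑) : ℚ → ℝ)}

section RationalPoints

variable {E ι : Type*} [AddCommGroup E] [Module ℝ E] {F : ι → E →ᵃ[ℝ] ℝ}

lemma lineMap_mem_rationalPoints {a b : E} (ha : a ∈ rationalPoints F)
    (hb : b ∈ rationalPoints F) (i : ι) :
    AffineMap.lineMap a b (F i a / (F i a - F i b)) ∈ rationalPoints F := by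
  intro k
  obtain ⟨x, hx⟩ := ha i
  obtain ⟨y, hy⟩ := hb i
  obtain ⟨x', hx'⟩ := ha k
  obtain ⟨y', hy'⟩ := hb k
  refine ⟨AffineMap.lineMap x' y' (x / (x - y)), ?_⟩
  rw [AffineMap.apply_lineMap, ← hx, ← hy, ← hx', ← hy']
  simp [AffineMap.lineMap_apply]

open Finset in
/-- Cutting the convex hull of finitely many rational points by a rational half-space gives the
convex hull of finitely many rational points. -/
lemma exists_convexHull_eq_inter_halfSpace (A : Finset E) (hA : ↑A ⊆ rationalPoints F) (i : ι) :
    ∃ B : Finset E, ↑B ⊆ rationalPoints F ∧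
      convexHull ℝ (A : Set E) ∩ {x | 0 ≤ F i x} = convexHull ℝ (B : Set E) := by
  classical
  set ψ := F i
  let A₁ := A.filter fun a => 0 ≤ ψ a
  let A₂ := A.filter fun a => ¬ 0 ≤ ψ a
  let c : E → E → E := fun a b => AffineMap.lineMap a b (ψ a / (ψ a - ψ b))
  have hmem : ∀ x ∈ A₁ ∪ image₂ c A₁ A₂,
      x ∈ A₁ ∨ ∃ a ∈ A, 0 ≤ ψ a ∧ ∃ b ∈ A, ψ b < 0 ∧ c a b = x := by
    intro x hx
    simpa [A₁, A₂, and_assoc] using hx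
  refine ⟨A₁ ∪ image₂ c A₁ A₂, fun x hx => ?_, Set.Subset.antisymm ?_ ?_⟩
  · rcases hmem x hx with hx | ⟨a, ha, -, b, hb, -, rfl⟩
    · exact hA (mem_filter.1 hx).1
    · exact lineMap_mem_rationalPoints (hA ha) (hA hb) i
  · rintro x ⟨hx, hψx⟩
    obtain ⟨w, hw, hw1, rfl⟩ := Finset.mem_convexHull'.1 hx
    have hψsum : ψ (∑ a ∈ A, w a • a) = ∑ a ∈ A, w a * ψ a := by
      have := A.map_affineCombination (fun a : E => a) w hw1 ψ
      rw [affineCombination_eq_linear_combination _ _ _ hw1,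
        affineCombination_eq_linear_combination _ _ _ hw1] at this
      simpa using this
    rw [Set.mem_ofPred_eq, hψsum] at hψx
    rw [← sum_filter_add_sum_filter_not A (fun a => 0 ≤ ψ a)] at hw1 hψx ⊢
    refine (convex_convexHull ℝ _).sum_add_sum_mem_of_crossing_mem (ψ := ψ)
      (fun a ha => hw a (mem_filter.1 ha).1) (fun a ha => hw a (mem_filter.1 ha).1) hw1
      (fun a ha => (mem_filter.1 ha).2) (fun a ha => not_le.1 (mem_filter.1 ha).2) hψx
      (fun a ha => subset_convexHull ℝ _ (mem_coe.2 (mem_union_left _ ha)))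
      (fun a ha b hb => subset_convexHull ℝ _
        (mem_coe.2 (mem_union_right _ (mem_image₂_of_mem ha hb))))
  · refine convexHull_min (fun x hx => ?_)
      ((convex_convexHull ℝ _).inter ((convex_Ici (0 : ℝ)).affine_preimage ψ))
    rcases hmem x hx with hx | ⟨a, ha, hψa, b, hb, hψb, rfl⟩
    · exact ⟨subset_convexHull ℝ _ (mem_coe.2 (mem_filter.1 hx).1), (mem_filter.1 hx).2⟩
    · have hab : 0 < ψ a - ψ b := by linarith
      refine ⟨(convex_convexHull ℝ _).lineMap_mem (subset_convexHull ℝ _ (mem_coe.2 ha))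
        (subset_convexHull ℝ _ (mem_coe.2 hb))
        ⟨by positivity, (div_le_one hab).2 (by linarith)⟩, ?_⟩
      have : ψ (c a b) = 0 := by
        rw [AffineMap.apply_lineMap, AffineMap.lineMap_apply_module]
        simp only [smul_eq_mul]
        field_simp
        ring
      exact this.ge

lemma exists_convexHull_eq_inter_halfSpaces (A : Finset E) (hA : ↑A ⊆ rationalPoints F)
    (s : Finset ι) :
    ∃ B : Finset E, ↑B ⊆ rationalPoints F ∧
      convexHull ℝ (A : Set E) ∩ {x | ∀ i ∈ s, 0 ≤ F i x} = convexHull ℝ (B : Set E) := by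
  classical
  induction s using Finset.induction_on with
  | empty => exact ⟨A, hA, by simp⟩
  | insert i s _ ih =>
    obtain ⟨B, hB, hAB⟩ := ih
    obtain ⟨B', hB', hBB'⟩ := exists_convexHull_eq_inter_halfSpace B hB i
    refine ⟨B', hB', ?_⟩
    rw [← hBB', ← hAB]
    ext x
    simp only [Finset.forall_mem_insert, Set.mem_inter_iff, Set.mem_ofPred_eq]
    tauto

end RationalPoints

/-- A form of Dickson's lemma: a family in a well-quasi-order is dominated from below by finitely
many of its members. -/
lemma exists_finset_forall_exists_le {T α : Type*} [PartialOrder α] [WellQuasiOrderedLE α]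
    (g : T → α) : ∃ s : Finset T, ∀ t, ∃ i ∈ s, g i ≤ g t := by
  classical
  have hfin : {x | Minimal (· ∈ Set.range g) x}.Finite :=
    WellQuasiOrderedLE.finite_of_isAntichain (setOfPred_minimal_antichain _)
  obtain ⟨s, -, hs⟩ := Finset.subset_set_image_iff (s := Set.univ) (t := hfin.toFinset) (f := g)
    |>.1 fun x hx => by simpa using (hfin.mem_toFinset.1 hx).prop
  refine ⟨s, fun t => ?_⟩
  obtain ⟨x, hxt, hx⟩ := exists_minimal_le_of_wellFoundedLT (· ∈ Set.range g) (g t) ⟨t, rfl⟩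
  obtain ⟨i, hi, rfl⟩ := Finset.mem_image.1 (hs ▸ hfin.mem_toFinset.2 hx)
  exact ⟨i, hi, hxt⟩

/-- Abstract Shokurov polytope statement (Proposition 3.11): let `P` be the convex hull of
rational points `v_1, …, v_p` in `ℝ^d`, and let `φ_t` (`t ∈ T`) be affine maps `ℝ^d → ℝ`
with `φ_t(v_j) ≥ -n` and `m · φ_t(v_j) ∈ ℤ` for all `t, j`. Then
`N_T = {x ∈ P | φ_t(x) ≥ 0 ∀ t}` is a rational polytope. -/
theorem NT_is_rational_polytope (d m n p : ℕ) (hm : 0 < m) (hn : 0 < n)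
    (v : Fin p → Fin d → ℚ)
    (P : Set (Fin d → ℝ)) (hP : P = convexHull ℝ (Set.range fun j => fun k => ((v j k : ℝ))))
    (T : Type*) (φ : T → ((Fin d → ℝ) →ᵃ[ℝ] ℝ))
    (hlow : ∀ t j, -(n : ℝ) ≤ φ t (fun k => ((v j k : ℝ))))
    (hint : ∀ t j, ∃ z : ℤ, (m : ℝ) * φ t (fun k => ((v j k : ℝ))) = (z : ℝ)) :
    ∃ (r : ℕ) (q : Fin r → Fin d → ℚ),
      {x ∈ P | ∀ t, 0 ≤ φ t x} =
        convexHull ℝ (Set.range fun i => fun k => ((q i k : ℝ))) := by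
  classical
  have hm' : (0 : ℝ) < m := Nat.cast_pos.2 hm
  choose z hz using hint
  have hz_low : ∀ t j, 0 ≤ z t j + m * n := by
    intro t j
    have h := mul_le_mul_of_nonneg_left (hlow t j) hm'.le
    rw [hz] at h
    have : (0 : ℝ) ≤ ((z t j + m * n : ℤ) : ℝ) := by push_cast; linarith
    exact_mod_cast this
  obtain ⟨s, hs⟩ := exists_finset_forall_exists_le fun t j => (z t j + m * n).toNat
  have hdom : ∀ t, ∃ i ∈ s, ∀ x ∈ P, φ i x ≤ φ t x := by
    intro t
    obtain ⟨i, hi, hit⟩ := hs t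
    refine ⟨i, hi, fun x hx => ?_⟩
    have hsub : P ⊆ (φ t - φ i) ⁻¹' Set.Ici 0 := by
      rw [hP]
      refine convexHull_min ?_ ((convex_Ici (0 : ℝ)).affine_preimage _)
      rintro _ ⟨j, rfl⟩
      have hle : z i j ≤ z t j := by
        have := hit j
        have := hz_low i j
        have := hz_low t j
        grind
      have hle' : (m : ℝ) * φ i (fun k => (v j k : ℝ)) ≤ m * φ t fun k => (v j k : ℝ) := by
        rw [hz, hz]
        exact_mod_cast hle
      simpa using le_of_mul_le_mul_left hle' hm'
    simpa using hsub hx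
  let F : Fin d ⊕ T → (Fin d → ℝ) →ᵃ[ℝ] ℝ :=
    Sum.elim (fun k => (LinearMap.proj k : (Fin d → ℝ) →ₗ[ℝ] ℝ).toAffineMap) φ
  let A : Finset (Fin d → ℝ) := Finset.univ.image fun j k => (v j k : ℝ)
  have hA : ↑A ⊆ rationalPoints F := by
    intro x hx
    obtain ⟨j, rfl⟩ : ∃ j, (fun k => (v j k : ℝ)) = x := by simpa [A] using hx
    rintro (k | t)
    · exact ⟨v j k, rfl⟩
    · refine ⟨z t j / m, ?_⟩
      push_cast
      rw [← hz]
      exact mul_div_cancel_left₀ _ hm'.ne'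
  obtain ⟨B, hB, hAB⟩ := exists_convexHull_eq_inter_halfSpaces A hA (s.image Sum.inr)
  have hB' : ∀ b : B, ∀ k, ∃ y : ℚ, (y : ℝ) = (b : Fin d → ℝ) k := fun b k => hB b.2 (Sum.inl k)
  choose q hq using hB'
  refine ⟨B.card, fun i => q (B.equivFin.symm i), ?_⟩
  have hrange : (Set.range fun i k => (q (B.equivFin.symm i) k : ℝ)) = ↑B := by
    simp only [hq]
    change Set.range ((fun b : B => (b : Fin d → ℝ)) ∘ B.equivFin.symm) = ↑B
    rw [B.equivFin.symm.surjective.range_comp]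
    exact Subtype.range_coe
  have hAP : convexHull ℝ (A : Set (Fin d → ℝ)) = P := by simp [A, hP]
  rw [hrange, ← hAB, hAP]
  ext x
  simp only [Set.mem_ofPred_eq, Set.mem_inter_iff, Finset.forall_mem_image]
  refine and_congr_right fun hx => ⟨fun h t _ => h t, fun h t => ?_⟩
  obtain ⟨i, hi, hit⟩ := hdom t
  exact (h hi).trans (hit x hx)
end

section
/- Under the hypotheses in the context, for every point x ∈ P there exists a real number α > 0 such that for every t ∈ T, if φ_t(x) > 0 then φ_t(x) > α. -/
/-- The values of a monotone real function on a well-quasi-order that exceed `c` are bounded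
away from `c`. -/
theorem Monotone.exists_pos_forall_add_lt {β : Type*} [Preorder β] [WellQuasiOrderedLE β] {f : β → ℝ}
    (hf : Monotone f) (c : ℝ) : ∃ ε : ℝ, 0 < ε ∧ ∀ k, c < f k → c + ε < f k := by
  have hwf : (f '' {k | c < f k}).IsWF :=
    ((Set.isPWO_of_wellQuasiOrderedLE {k | c < f k}).image_of_monotone hf).isWF
  rcases (f '' {k | c < f k}).eq_empty_or_nonempty with hempty | hne
  · refine ⟨1, one_pos, fun k hk => ?_⟩
    have hmem : f k ∈ f '' {k | c < f k} := ⟨k, hk, rfl⟩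
    simp [hempty] at hmem
  · obtain ⟨k₀, hk₀, hmin⟩ := hwf.min_mem hne
    have hlt : c < f k₀ := hk₀
    refine ⟨(f k₀ - c) / 2, by linarith, fun k hk => ?_⟩
    have hle : f k₀ ≤ f k := hmin ▸ hwf.min_le hne ⟨k, hk, rfl⟩
    linarith

/-- Abstract Lemma 3.8(1): let `P` be the convex hull of rational points `v_1, …, v_p`
in `ℝ^d`, and let `φ_t` (`t ∈ T`) be affine maps `ℝ^d → ℝ` with `φ_t(v_j) ≥ -n` and
`m · φ_t(v_j) ∈ ℤ` for all `t, j`. Then for every `x ∈ P` there is `α > 0` such that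
`φ_t(x) > 0` implies `φ_t(x) > α`. -/
theorem exists_pos_lower_bound_on_polytope (d m n p : ℕ) (hm : 0 < m) (hn : 0 < n)
    (v : Fin p → Fin d → ℚ)
    (P : Set (Fin d → ℝ)) (hP : P = convexHull ℝ (Set.range fun j => fun k => ((v j k : ℝ))))
    (T : Type*) (φ : T → ((Fin d → ℝ) →ᵃ[ℝ] ℝ))
    (hlow : ∀ t j, -(n : ℝ) ≤ φ t (fun k => ((v j k : ℝ))))
    (hint : ∀ t j, ∃ z : ℤ, (m : ℝ) * φ t (fun k => ((v j k : ℝ))) = (z : ℝ)) :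
    ∀ x ∈ P, ∃ α : ℝ, 0 < α ∧ ∀ t, 0 < φ t x → α < φ t x := by
  intro x hx
  rw [hP, convexHull_range_eq_exists_affineCombination] at hx
  obtain ⟨s, w, hw, hsum, rfl⟩ := hx
  have hmono : Monotone fun k : Fin p → ℕ => ∑ j ∈ s, w j * (k j : ℝ) := fun a b hab =>
    Finset.sum_le_sum fun j hj =>
      mul_le_mul_of_nonneg_left (Nat.cast_le.mpr (hab j)) (hw j hj)
  obtain ⟨ε, hε, hgap⟩ := hmono.exists_pos_forall_add_lt ((m : ℝ) * n)
  have hm' : (0 : ℝ) < m := Nat.cast_pos.mpr hm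
  refine ⟨ε / m, div_pos hε hm', fun t ht => ?_⟩
  have hnat : ∀ j, ∃ k : ℕ, (k : ℝ) = m * φ t (fun i => (v j i : ℝ)) + m * n := by
    intro j
    obtain ⟨z, hz⟩ := hint t j
    have hnonneg : 0 ≤ z + m * n := by
      have h := mul_le_mul_of_nonneg_left (hlow t j) hm'.le
      rw [hz] at h
      have h' : (0 : ℝ) ≤ ((z + m * n : ℤ) : ℝ) := by push_cast; linarith
      exact_mod_cast h'
    obtain ⟨k, hk⟩ := Int.eq_ofNat_of_zero_le hnonneg
    refine ⟨k, ?_⟩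
    rw [hz]
    exact_mod_cast hk.symm
  choose k hk using hnat
  rw [Finset.map_affineCombination _ _ _ hsum,
    Finset.affineCombination_eq_linear_combination _ _ _ hsum] at ht ⊢
  simp only [Function.comp_apply, smul_eq_mul] at ht ⊢
  have hval : ∑ j ∈ s, w j * (k j : ℝ) =
      m * ∑ j ∈ s, w j * φ t (fun i => (v j i : ℝ)) + m * n := by
    simp only [hk, mul_add, Finset.sum_add_distrib, ← Finset.sum_mul, hsum, one_mul,
      Finset.mul_sum]
    congr 1
    exact Finset.sum_congr rfl fun j _ => by ring
  have hlt := hgap k (by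
    simp only [hval]
    linarith [mul_pos hm' ht])
  simp only [hval] at hlt
  rw [div_lt_iff₀ hm']
  linarith
end

section
/- Under the hypotheses in the context, suppose x ∈ P satisfies φ_t(x) ≥ 0 for every t ∈ T. Then there exist finitely many points q_1,…,q_r ∈ ℚ^d, each lying in P and satisfying φ_t(q_i) ≥ 0 for all t ∈ T and all 1 ≤ i ≤ r, and positive real numbers a_1,…,a_r with ∑_{i=1}^r a_i = 1 and x = ∑_{i=1}^r a_i·q_i; moreover, there exists a positive integer m' such that m'·φ_t(q_i) ∈ ℤ for every t ∈ T and every 1 ≤ i ≤ r. -/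
open Topology

/-- A real vector lies in the convex hull of the rational vectors of any of its neighbourhoods. -/
theorem mem_convexHull_rat_of_mem_nhds {κ : Type*} [Fintype κ] (b : κ → ℝ) {N : Set (κ → ℝ)}
    (hN : N ∈ 𝓝 b) : b ∈ convexHull ℝ {c ∈ N | ∃ q : κ → ℚ, c = fun k => (q k : ℝ)} := by
  obtain ⟨ε, hε, hball⟩ := Metric.mem_nhds_iff.mp hN
  have hb : b ∈ convexHull ℝ
      (Set.univ.pi fun k => {r : ℝ | dist r (b k) < ε ∧ ∃ q : ℚ, r = q}) := by
    rw [convexHull_pi]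
    intro k _
    obtain ⟨l, hl, hlb⟩ := exists_rat_btwn (sub_lt_self (b k) hε)
    obtain ⟨u, hbu, hu⟩ := exists_rat_btwn (lt_add_of_pos_right (b k) hε)
    have hl' : dist (l : ℝ) (b k) < ε := by rw [Real.dist_eq, abs_lt]; constructor <;> linarith
    have hu' : dist (u : ℝ) (b k) < ε := by rw [Real.dist_eq, abs_lt]; constructor <;> linarith
    apply segment_subset_convexHull (s := {r : ℝ | dist r (b k) < ε ∧ ∃ q : ℚ, r = q})
      ⟨hl', l, rfl⟩ ⟨hu', u, rfl⟩
    rw [segment_eq_Icc (hlb.trans hbu).le]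
    exact ⟨hlb.le, hbu.le⟩
  refine convexHull_mono (fun c hc => Set.mem_sep (hball ?_) ?_) hb
  · exact (dist_pi_lt_iff hε).2 fun k => (hc k trivial).1
  · choose q hq using fun k => (hc k trivial).2
    exact ⟨q, funext hq⟩

/-- For finitely many rational linear forms, a real vector lies in the convex hull of the rational
vectors at which every form has the same sign. -/
theorem mem_convexHull_rat_sign_eq {ι : Type*} [Fintype ι] {A : Set (ι → ℚ)} (hA : A.Finite)
    (y : ι → ℝ) :
    y ∈ convexHull ℝ ((fun (μ : ι → ℚ) i => (μ i : ℝ)) ''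
      {μ | ∀ a ∈ A,
        SignType.sign (∑ i, (a i : ℝ) * μ i) = SignType.sign (∑ i, (a i : ℝ) * y i)}) := by
  have hmem : ∀ i, y i ∈ Submodule.span ℚ (Set.range y) :=
    fun i => Submodule.subset_span ⟨i, rfl⟩
  have : FiniteDimensional ℚ (Submodule.span ℚ (Set.range y)) :=
    FiniteDimensional.span_of_finite ℚ (Set.finite_range y)
  let B := Module.finBasis ℚ (Submodule.span ℚ (Set.range y))
  let u : Fin _ → ι → ℚ := fun k i => B.repr ⟨y i, hmem i⟩ k
  let b : Fin _ → ℝ := fun k => (B k : ℝ)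
  let F : (Fin _ → ℝ) →ₗ[ℝ] (ι → ℝ) := Fintype.linearCombination ℝ fun k i => (u k i : ℝ)
  have hF : ∀ c i, F c i = ∑ k, c k * (u k i : ℝ) := fun c i => by
    simp [F, Fintype.linearCombination_apply]
  have hFb : F b = y := by
    ext i
    have h := congrArg Subtype.val (B.sum_repr ⟨y i, hmem i⟩)
    rw [AddSubmonoidClass.coe_finsetSum] at h
    simpa only [hF, u, b, Submodule.coe_smul, Rat.smul_def, mul_comm] using h
  have htight : ∀ a : ι → ℚ, ∑ i, (a i : ℝ) * y i = 0 → ∀ c, ∑ i, (a i : ℝ) * F c i = 0 := by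
    intro a ha c
    have h0 : ∑ i, a i • (⟨y i, hmem i⟩ : Submodule.span ℚ (Set.range y)) = 0 := by
      apply Subtype.ext
      simpa [Rat.smul_def] using ha
    have hk : ∀ k, ∑ i, a i * u k i = 0 := fun k => by
      have h := DFunLike.congr_fun (congrArg B.repr h0) k
      simpa only [map_sum, map_smul, Finsupp.coe_finsetSum, Finset.sum_apply, Finsupp.smul_apply,
        smul_eq_mul, map_zero, Finsupp.zero_apply] using h
    have hk' : ∀ k, ∑ i, (a i : ℝ) * (u k i : ℝ) = 0 := fun k => by exact_mod_cast hk k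
    simp_rw [hF, Finset.mul_sum]
    rw [Finset.sum_comm]
    refine Finset.sum_eq_zero fun k _ => ?_
    rw [← mul_zero (c k), ← hk' k, Finset.mul_sum]
    exact Finset.sum_congr rfl fun i _ => by ring
  have hcont : Continuous F := F.continuous_of_finiteDimensional
  have hN : ∀ᶠ c in 𝓝 b, ∀ a ∈ A,
      SignType.sign (∑ i, (a i : ℝ) * F c i) = SignType.sign (∑ i, (a i : ℝ) * y i) := by
    refine (Filter.eventually_all_finite hA).2 fun a _ => ?_
    by_cases ha : ∑ i, (a i : ℝ) * y i = 0
    · exact Filter.Eventually.of_forall fun c => by rw [htight a ha c, ha]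
    · have h1 : Filter.Tendsto (fun c => ∑ i, (a i : ℝ) * F c i) (𝓝 b)
          (𝓝 (∑ i, (a i : ℝ) * y i)) := by
        have : Continuous fun c => ∑ i, (a i : ℝ) * F c i := by fun_prop
        simpa [hFb] using this.tendsto b
      have h2 := (continuousAt_sign_of_ne_zero ha).tendsto.comp h1
      rw [nhds_discrete SignType, Filter.tendsto_pure] at h2
      exact h2
  have hy := Set.mem_image_of_mem F (mem_convexHull_rat_of_mem_nhds b hN)
  rw [F.image_convexHull, hFb] at hy
  refine convexHull_mono ?_ hy
  rintro _ ⟨_, ⟨hc, q, rfl⟩, rfl⟩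
  have hq : (fun i => ((∑ k, q k * u k i : ℚ) : ℝ)) = F fun k => (q k : ℝ) := by
    ext i
    simp [hF]
  refine ⟨fun i => ∑ k, q k * u k i, fun a ha => ?_, hq⟩
  rw [← hc a ha, ← hq]

/-- Dickson's lemma: a family in a well-quasi-order is bounded below by a finite subfamily. -/
theorem exists_finite_forall_exists_le {T α : Type*} [PartialOrder α] [WellQuasiOrderedLE α]
    (f : T → α) : ∃ S : Set T, S.Finite ∧ ∀ t, ∃ s ∈ S, f s ≤ f t := by
  have hfin : {c | Minimal (· ∈ Set.range f) c}.Finite :=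
    WellQuasiOrderedLE.finite_of_isAntichain (setOfPred_minimal_antichain _)
  obtain ⟨S, -, hS, himg⟩ := (Set.exists_subset_image_finite_and (f := f) (s := Set.univ)
    (p := (· = {c | Minimal (· ∈ Set.range f) c}))).1
    ⟨_, fun c hc => by simpa using hc.prop, hfin, rfl⟩
  refine ⟨S, hS, fun t => ?_⟩
  obtain ⟨c, hct, hc⟩ := exists_minimal_le_of_wellFoundedLT (· ∈ Set.range f) (f t) ⟨t, rfl⟩
  have hcS : c ∈ f '' S := by rw [himg]; exact hc
  obtain ⟨s, hs, rfl⟩ := hcS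
  exact ⟨s, hs, hct⟩

/-- Finitely many rational numbers have a common denominator. -/
theorem exists_nat_mul_eq_int {ι : Type*} [Fintype ι] (q : ι → ℚ) :
    ∃ D : ℕ, 0 < D ∧ ∀ i, ∃ z : ℤ, (D : ℚ) * q i = z := by
  refine ⟨∏ i, (q i).den, Finset.prod_pos fun i _ => (q i).den_pos, fun i => ?_⟩
  obtain ⟨e, he⟩ := Finset.dvd_prod_of_mem (fun i => (q i).den) (Finset.mem_univ i)
  refine ⟨e * (q i).num, ?_⟩
  rw [he]
  push_cast
  rw [mul_comm ((q i).den : ℚ), mul_assoc, Rat.den_mul_eq_num]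

theorem AffineMap.map_sum_smul {ι E : Type*} [Fintype ι] [AddCommGroup E] [Module ℝ E]
    (f : E →ᵃ[ℝ] ℝ) (w : ι → ℝ) (hw : ∑ i, w i = 1) (v : ι → E) :
    f (∑ i, w i • v i) = ∑ i, w i * f (v i) := by
  rw [← Finset.univ.affineCombination_eq_linear_combination v w hw,
    Finset.map_affineCombination _ _ _ hw,
    Finset.univ.affineCombination_eq_linear_combination _ w hw]
  rfl

theorem mem_convexHull_range_iff {ι E : Type*} [Fintype ι] [AddCommGroup E] [Module ℝ E]
    (v : ι → E) (x : E) : x ∈ convexHull ℝ (Set.range v) ↔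
      ∃ w : ι → ℝ, (∀ i, 0 ≤ w i) ∧ ∑ i, w i = 1 ∧ ∑ i, w i • v i = x := by
  classical
  have h := (Fintype.linearCombination ℝ v).image_convexHull
    (Set.range fun i => Pi.single (M := fun _ => ℝ) i 1)
  rw [← Set.range_comp, convexHull_rangle_single_eq_stdSimplex] at h
  have hv : Fintype.linearCombination ℝ v ∘ (fun i => Pi.single (M := fun _ => ℝ) i 1) = v := by
    ext i
    simp
  rw [hv] at h
  rw [← h]
  simp [stdSimplex, Fintype.linearCombination_apply, and_assoc]

/-- Given a possibly infinite family of integral linear inequalities whose coefficients are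
uniformly bounded below, every solution in the standard simplex is a positive combination of
rational solutions in the standard simplex. -/
theorem exists_rat_weights {ι T : Type*} [Fintype ι] (z : T → ι → ℤ) (N : ℕ)
    (hz : ∀ t j, -(N : ℤ) ≤ z t j) (w : ι → ℝ) (hw0 : ∀ j, 0 ≤ w j) (hw1 : ∑ j, w j = 1)
    (hw : ∀ t, 0 ≤ ∑ j, w j * (z t j : ℝ)) :
    ∃ (r : ℕ) (ν : Fin r → ι → ℚ) (a : Fin r → ℝ),
      (∀ i j, 0 ≤ ν i j) ∧ (∀ i, ∑ j, ν i j = 1) ∧ (∀ t i, 0 ≤ ∑ j, ν i j * (z t j : ℚ)) ∧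
      (∀ i, 0 < a i) ∧ ∀ j, w j = ∑ i, a i * (ν i j : ℝ) := by
  classical
  obtain ⟨S, hS, hle⟩ := exists_finite_forall_exists_le fun t j => (z t j + N).toNat
  have hle' : ∀ t, ∃ s ∈ S, ∀ j, z s j ≤ z t j := fun t => by
    obtain ⟨s, hs, h⟩ := hle t
    refine ⟨s, hs, fun j => ?_⟩
    have h1 := h j
    have h2 := hz s j
    have h3 := hz t j
    dsimp only at h1
    omega
  let A : Set (ι → ℚ) := (fun s j => (z s j : ℚ)) '' S ∪ Set.range (fun j => Pi.single j 1) ∪ {1}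
  have hA : A.Finite := ((hS.image _).union (Set.finite_range _)).union (Set.finite_singleton _)
  obtain ⟨κ, _, y, b, hy, -, hb, -, hbw⟩ :=
    eq_pos_convex_span_of_mem_convexHull (mem_convexHull_rat_sign_eq hA w)
  choose μ hμ hμy using fun k => hy (Set.mem_range_self k)
  have hsum : ∀ k, 0 < ∑ j, μ k j := fun k => by
    have h := hμ k 1 (by simp [A])
    simp only [Pi.one_apply, Rat.cast_one, one_mul, hw1, sign_one, sign_eq_one_iff] at h
    exact_mod_cast h
  have hnonneg : ∀ k j, 0 ≤ μ k j := fun k j => by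
    have h := hμ k (Pi.single j 1) (by simp [A])
    have e : ∀ u : ι → ℝ, ∑ i, ((Pi.single j 1 : ι → ℚ) i : ℝ) * u i = u j := fun u => by
      rw [Finset.sum_eq_single j] <;> simp +contextual
    rw [e, e] at h
    have h' := sign_nonneg_iff.1 (h ▸ sign_nonneg_iff.2 (hw0 j))
    exact_mod_cast h'
  have hS0 : ∀ k, ∀ s ∈ S, 0 ≤ ∑ j, μ k j * (z s j : ℚ) := fun k s hs => by
    have h := hμ k (fun j => (z s j : ℚ)) (.inl (.inl ⟨s, hs, rfl⟩))
    have hw' := hw s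
    simp only [Rat.cast_intCast, mul_comm] at h hw'
    have h' := sign_nonneg_iff.1 (h ▸ sign_nonneg_iff.2 hw')
    simp_rw [mul_comm (μ k _)]
    exact_mod_cast h'
  have hT0 : ∀ k t, 0 ≤ ∑ j, μ k j * (z t j : ℚ) := fun k t => by
    obtain ⟨s, hs, hst⟩ := hle' t
    refine (hS0 k s hs).trans (Finset.sum_le_sum fun j _ => ?_)
    exact mul_le_mul_of_nonneg_left (by exact_mod_cast hst j) (hnonneg k j)
  let e := (Fintype.equivFin κ).symm
  refine ⟨Fintype.card κ, fun i j => μ (e i) j / ∑ l, μ (e i) l,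
    fun i => b (e i) * ((∑ l, μ (e i) l : ℚ) : ℝ), fun i j => div_nonneg (hnonneg _ _) (hsum _).le,
    fun i => ?_, fun t i => ?_, fun i => mul_pos (hb _) (by exact_mod_cast hsum (e i)), fun j => ?_⟩
  · rw [← Finset.sum_div, div_self (hsum _).ne']
  · simp_rw [div_mul_eq_mul_div]
    rw [← Finset.sum_div]
    exact div_nonneg (hT0 _ t) (hsum _).le
  · have h : w j = ∑ k, b k * (μ k j : ℝ) := by
      rw [← hbw]
      simp [← hμy]
    rw [h, ← e.sum_comp]
    refine Finset.sum_congr rfl fun i _ => ?_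
    have hne : ((∑ l, μ (e i) l : ℚ) : ℝ) ≠ 0 := by exact_mod_cast (hsum (e i)).ne'
    rw [Rat.cast_div]
    field_simp

/-- Abstract "moreover" part of Proposition 3.11: let `P` be the convex hull of rational
points `v_1, …, v_p` in `ℝ^d`, and let `φ_t` (`t ∈ T`) be affine maps with `φ_t(v_j) ≥ -n`
and `m · φ_t(v_j) ∈ ℤ`. If `x ∈ P` satisfies `φ_t(x) ≥ 0` for all `t`, then `x` is a
positive convex combination of rational points `q_i ∈ P` with `φ_t(q_i) ≥ 0` for all `t, i`,
and there is a positive integer `m'` with `m' · φ_t(q_i) ∈ ℤ` for all `t, i`. -/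
theorem rational_convex_decomposition_on_polytope (d m n p : ℕ) (hm : 0 < m) (hn : 0 < n)
    (v : Fin p → Fin d → ℚ)
    (P : Set (Fin d → ℝ)) (hP : P = convexHull ℝ (Set.range fun j => fun k => ((v j k : ℝ))))
    (T : Type*) (φ : T → ((Fin d → ℝ) →ᵃ[ℝ] ℝ))
    (hlow : ∀ t j, -(n : ℝ) ≤ φ t (fun k => ((v j k : ℝ))))
    (hint : ∀ t j, ∃ z : ℤ, (m : ℝ) * φ t (fun k => ((v j k : ℝ))) = (z : ℝ)) :
    ∀ x ∈ P, (∀ t, 0 ≤ φ t x) →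
      ∃ (r : ℕ) (q : Fin r → Fin d → ℚ) (a : Fin r → ℝ),
        (∀ i, (fun k => ((q i k : ℝ))) ∈ P) ∧
        (∀ t i, 0 ≤ φ t (fun k => ((q i k : ℝ)))) ∧
        (∀ i, 0 < a i) ∧ (∑ i, a i = 1) ∧
        (x = ∑ i, a i • (fun k => ((q i k : ℝ)) : Fin d → ℝ)) ∧
        ∃ m' : ℕ, 0 < m' ∧ ∀ t i, ∃ z : ℤ, (m' : ℝ) * φ t (fun k => ((q i k : ℝ))) = (z : ℝ) := by
  subst hP
  intro x hx hφx
  let V : Fin p → Fin d → ℝ := fun j k => (v j k : ℝ)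
  obtain ⟨w, hw0, hw1, rfl⟩ := (mem_convexHull_range_iff V x).1 hx
  choose z hz using hint
  have hm' : (0 : ℝ) < m := by exact_mod_cast hm
  have hφ : ∀ t (u : Fin p → ℝ), ∑ j, u j = 1 →
      m * φ t (∑ j, u j • V j) = ∑ j, u j * (z t j : ℝ) := fun t u hu => by
    rw [(φ t).map_sum_smul u hu, Finset.mul_sum]
    refine Finset.sum_congr rfl fun j _ => ?_
    rw [← hz]
    ring
  have hzlow : ∀ t j, -((m * n : ℕ) : ℤ) ≤ z t j := fun t j => by
    have h : -((m : ℝ) * n) ≤ z t j := by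
      rw [← hz]
      linarith [mul_le_mul_of_nonneg_left (hlow t j) hm'.le]
    exact_mod_cast h
  obtain ⟨r, ν, a, hν0, hν1, hνz, ha, haw⟩ := exists_rat_weights z (m * n) hzlow w hw0 hw1
    fun t => by rw [← hφ t w hw1]; exact mul_nonneg hm'.le (hφx t)
  have hν1' : ∀ i, ∑ j, (ν i j : ℝ) = 1 := fun i => by exact_mod_cast hν1 i
  have hq : ∀ i, (fun k => ((∑ j, ν i j * v j k : ℚ) : ℝ)) = ∑ j, (ν i j : ℝ) • V j := fun i => by
    ext k
    simp [V]
  obtain ⟨D, hD, hDint⟩ := exists_nat_mul_eq_int fun ij : Fin r × Fin p => ν ij.1 ij.2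
  choose c hc using hDint
  refine ⟨r, fun i k => ∑ j, ν i j * v j k, a, fun i => ?_, fun t i => ?_, ha, ?_, ?_,
    D * m, Nat.mul_pos hD hm, fun t i => ?_⟩
  · rw [hq]
    exact (mem_convexHull_range_iff V _).2
      ⟨fun j => ν i j, fun j => Rat.cast_nonneg.2 (hν0 i j), hν1' i, rfl⟩
  · rw [hq]
    refine nonneg_of_mul_nonneg_right ?_ hm'
    rw [hφ t _ (hν1' i)]
    exact_mod_cast hνz t i
  · simp_rw [haw] at hw1
    rw [Finset.sum_comm] at hw1
    simpa only [← Finset.mul_sum, hν1', mul_one] using hw1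
  · simp_rw [hq, haw, Finset.sum_smul, Finset.smul_sum, mul_smul]
    exact Finset.sum_comm
  · rw [hq]
    refine ⟨∑ j, c (i, j) * z t j, ?_⟩
    push_cast
    rw [mul_assoc, hφ t _ (hν1' i), Finset.mul_sum]
    refine Finset.sum_congr rfl fun j _ => ?_
    have h : (D : ℝ) * ν i j = c (i, j) := by exact_mod_cast hc (i, j)
    rw [← h, mul_assoc]
end
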